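/- In the linear setting, assume (C1): lim_{n→∞} (1 − h_n)·ln n = 0, and (C2): sup_{k≥0} (b_k − b_{k+1})/b_{k+1} < ∞. Then limsup_{n→∞} sup{ m_n([0,r])/r^{h_n} : r ∈ (0,1) } ≤ 1. -/

import Mathlib

open Set Filter MeasureTheory Topology

noncomputable section

/-- Composition `g_{i₁} ∘ g_{i₂} ∘ ⋯ ∘ g_{i_l}` along a finite word. -/
def wordComp (g : ℕ → ℝ → ℝ) : List ℕ → ℝ → ℝ
  | [] => id
  | k :: w => g k ∘ wordComp g w

/-- The limit set `J_n` of the IFS `S_n = {g_1, …, g_n}`. -/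
def limitSet (g : ℕ → ℝ → ℝ) (n : ℕ) : Set ℝ :=
  ⋂ l : ℕ, ⋃ w ∈ {w : List ℕ | w.length = l + 1 ∧ ∀ i ∈ w, 1 ≤ i ∧ i ≤ n},
    wordComp g w '' Set.Icc (0 : ℝ) 1

/-- The decreasing affine map `g_k(x) = b_{k-1} - (b_{k-1} - b_k)·x`. -/
def gAff (b : ℕ → ℝ) (k : ℕ) (x : ℝ) : ℝ := b (k - 1) - (b (k - 1) - b k) * x

/-- The normalized Hausdorff measure `m_n` on the limit set `J_n`. -/
def normMeas (g : ℕ → ℝ → ℝ) (h : ℕ → ℝ) (n : ℕ) (A : Set ℝ) : ENNReal :=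
  μH[h n] (A ∩ limitSet g n) / μH[h n] (limitSet g n)

/-- levels -/
def lev (g : ℕ → ℝ → ℝ) (n : ℕ) : ℕ → Set ℝ
  | 0 => Set.Icc (0 : ℝ) 1
  | l + 1 => ⋃ k ∈ Finset.Icc 1 n, g k '' lev g n l

lemma lev_eq (g : ℕ → ℝ → ℝ) (n : ℕ) (l : ℕ) :
    (⋃ w ∈ {w : List ℕ | w.length = l ∧ ∀ i ∈ w, 1 ≤ i ∧ i ≤ n},
      wordComp g w '' Set.Icc (0 : ℝ) 1) = lev g n l := by
  induction l with
  | zero =>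
    ext x
    simp only [mem_iUnion, lev]
    constructor
    · rintro ⟨w, ⟨hw, -⟩, hx⟩
      rw [List.length_eq_zero_iff] at hw
      subst hw
      simpa [wordComp] using hx
    · intro hx
      exact ⟨[], ⟨rfl, by simp⟩, by simpa [wordComp] using hx⟩
  | succ l ih =>
    ext x
    rw [lev, ← ih]
    simp only [mem_iUnion]
    constructor
    · rintro ⟨w, ⟨hw, hi⟩, y, hy, rfl⟩
      match w, hw, hi with
      | k :: w, hw, hi =>
        refine ⟨k, Finset.mem_Icc.2 (hi k (by simp)), wordComp g w y, ?_, rfl⟩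
        simp only [mem_iUnion]
        exact ⟨w, ⟨by simpa using hw, fun i h => hi i (by simp [h])⟩, y, hy, rfl⟩
    · rintro ⟨k, hk, z, hz, rfl⟩
      simp only [mem_iUnion] at hz
      obtain ⟨w, ⟨hw, hi⟩, y, hy, rfl⟩ := hz
      refine ⟨k :: w, ⟨by simp [hw], ?_⟩, y, hy, rfl⟩
      intro i h
      rcases List.mem_cons.1 h with rfl | h
      · exact Finset.mem_Icc.1 hk
      · exact hi i h

lemma limitSet_eq (g : ℕ → ℝ → ℝ) (n : ℕ) : limitSet g n = ⋂ l : ℕ, lev g n (l + 1) := by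
  unfold limitSet
  simp_rw [lev_eq]

lemma lev_anti (g : ℕ → ℝ → ℝ) (n : ℕ)
    (hg : ∀ k ∈ Finset.Icc 1 n, g k '' Set.Icc 0 1 ⊆ Set.Icc 0 1) : Antitone (lev g n) := by
  apply antitone_nat_of_succ_le
  intro l
  induction l with
  | zero => exact iUnion₂_subset hg
  | succ l ih =>
    exact iUnion₂_mono fun k _ => image_mono ih

lemma limitSet_sub (g : ℕ → ℝ → ℝ) (n : ℕ)
    (hg : ∀ k ∈ Finset.Icc 1 n, g k '' Set.Icc 0 1 ⊆ Set.Icc 0 1)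
    (hinj : ∀ k ∈ Finset.Icc 1 n, Function.Injective (g k)) :
    limitSet g n ⊆ ⋃ k ∈ Finset.Icc 1 n, g k '' limitSet g n := by
  intro x hx
  by_contra hcon
  simp only [mem_iUnion, not_exists] at hcon
  have key : ∀ k, ∃ l, k ∈ Finset.Icc 1 n → ∀ y, g k y = x → y ∉ lev g n l := by
    intro k
    by_cases hk : k ∈ Finset.Icc 1 n
    · by_cases hy : ∃ y, g k y = x
      · obtain ⟨y, hy⟩ := hy
        have h1 : y ∉ limitSet g n := fun h => hcon k hk ⟨y, h, hy⟩
        rw [limitSet_eq] at h1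
        simp only [mem_iInter, not_forall] at h1
        obtain ⟨l, hl⟩ := h1
        refine ⟨l + 1, fun _ z hz => ?_⟩
        rwa [hinj k hk (hz.trans hy.symm)]
      · exact ⟨0, fun _ y h => absurd ⟨y, h⟩ hy⟩
    · exact ⟨0, fun h => absurd h hk⟩
  choose L hL using key
  have h2 : x ∈ lev g n ((Finset.Icc 1 n).sup L + 1) := by
    rw [limitSet_eq] at hx
    exact mem_iInter.1 hx _
  rw [lev] at h2
  simp only [mem_iUnion] at h2
  obtain ⟨k, hk, y, hy, hxy⟩ := h2
  exact hL k hk y hxy (lev_anti g n hg (Finset.le_sup hk) hy)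

lemma limitSet_Icc (g : ℕ → ℝ → ℝ) (n : ℕ)
    (hg : ∀ k ∈ Finset.Icc 1 n, g k '' Set.Icc 0 1 ⊆ Set.Icc 0 1) :
    limitSet g n ⊆ Set.Icc 0 1 := by
  rw [limitSet_eq]
  exact (iInter_subset _ 0).trans (lev_anti g n hg (Nat.zero_le 1))

lemma gAff_lip (b : ℕ → ℝ) (hb : StrictAnti b) (k : ℕ) :
    LipschitzWith (Real.toNNReal (b (k-1) - b k)) (gAff b k) := by
  apply LipschitzWith.of_dist_le_mul
  intro x y
  have : b k ≤ b (k-1) := hb.antitone (Nat.sub_le _ _)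
  rw [Real.coe_toNNReal _ (by linarith), Real.dist_eq, Real.dist_eq, gAff, gAff,
    ← abs_of_nonneg (show 0 ≤ b (k-1) - b k by linarith), ← abs_mul,
    abs_of_nonneg (show 0 ≤ b (k-1) - b k by linarith), ← abs_neg]
  apply le_of_eq
  congr 1
  ring

lemma normMeas_cover (b : ℕ → ℝ) (h : ℕ → ℝ) (n : ℕ) (hh : 0 ≤ h n) (hb : StrictAnti b)
    (hg : ∀ k ∈ Finset.Icc 1 n, gAff b k '' Set.Icc 0 1 ⊆ Set.Icc 0 1)
    (hinj : ∀ k ∈ Finset.Icc 1 n, Function.Injective (gAff b k)) (A : Set ℝ) :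
    normMeas (gAff b) h n A ≤ ∑ k ∈ Finset.Icc 1 n,
      ENNReal.ofReal ((b (k-1) - b k) ^ h n) * normMeas (gAff b) h n (gAff b k ⁻¹' A) := by
  have h1 : A ∩ limitSet (gAff b) n ⊆
      ⋃ k ∈ Finset.Icc 1 n, gAff b k '' (gAff b k ⁻¹' A ∩ limitSet (gAff b) n) := by
    rintro x ⟨hA, hx⟩
    have := limitSet_sub _ n hg hinj hx
    simp only [mem_iUnion] at this ⊢
    obtain ⟨k, hk, y, hy, rfl⟩ := this
    exact ⟨k, hk, y, ⟨hA, hy⟩, rfl⟩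
  have h2 : μH[h n] (A ∩ limitSet (gAff b) n) ≤ ∑ k ∈ Finset.Icc 1 n,
      ENNReal.ofReal ((b (k-1) - b k) ^ h n) *
        μH[h n] (gAff b k ⁻¹' A ∩ limitSet (gAff b) n) := by
    refine (measure_mono h1).trans ((measure_biUnion_finset_le _ _).trans ?_)
    apply Finset.sum_le_sum
    intro k _
    refine ((gAff_lip b hb k).hausdorffMeasure_image_le hh _).trans ?_
    have : b k ≤ b (k-1) := hb.antitone (Nat.sub_le _ _)
    rw [← ENNReal.ofReal_rpow_of_nonneg (by linarith) hh]
    rfl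
  unfold normMeas
  refine (ENNReal.div_le_div_right h2 _).trans (le_of_eq ?_)
  simp only [div_eq_mul_inv, Finset.sum_mul, mul_assoc]

lemma sum_rpow_le (s : Finset ℕ) (a : ℕ → ℝ) (ha : ∀ k ∈ s, 0 ≤ a k) (h T : ℝ) (n : ℕ) (hn : s.card ≤ n)
    (h0 : 0 < h) (h1 : h ≤ 1) (hT : ∑ k ∈ s, a k ≤ T) :
    ∑ k ∈ s, a k ^ h ≤ (n : ℝ) ^ (1 - h) * T ^ h := by
  have hp : 1 ≤ 1 / h := by rw [le_div_iff₀ h0]; linarith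
  have key := Real.rpow_sum_le_const_mul_sum_rpow s (fun k => a k ^ h) hp
  have e1 : ∑ k ∈ s, |a k ^ h| = ∑ k ∈ s, a k ^ h :=
    Finset.sum_congr rfl fun k hk => abs_of_nonneg (Real.rpow_nonneg (ha k hk) _)
  have e2 : ∑ k ∈ s, |a k ^ h| ^ (1/h) = ∑ k ∈ s, a k :=
    Finset.sum_congr rfl fun k hk => by
      rw [abs_of_nonneg (Real.rpow_nonneg (ha k hk) _), ← Real.rpow_mul (ha k hk),
        mul_one_div_cancel h0.ne', Real.rpow_one]
  simp only [e1, e2] at key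
  have hs : 0 ≤ ∑ k ∈ s, a k ^ h := Finset.sum_nonneg fun k hk => Real.rpow_nonneg (ha k hk) _
  have hs' : 0 ≤ ∑ k ∈ s, a k := Finset.sum_nonneg ha
  have k2 := Real.rpow_le_rpow (by positivity) key h0.le
  rw [← Real.rpow_mul hs, one_div_mul_cancel h0.ne', Real.rpow_one,
    Real.mul_rpow (by positivity) hs', ← Real.rpow_mul (by positivity)] at k2
  have e3 : (1 / h - 1) * h = 1 - h := by field_simp
  rw [e3] at k2
  refine k2.trans ?_
  have : (s.card : ℝ) ≤ n := by exact_mod_cast hn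
  have h3 : 0 ≤ 1 - h := by linarith
  gcongr

lemma rpow_le_add (x h : ℝ) (hx : 0 ≤ x) (h0 : 0 ≤ h) (h1 : h ≤ 1) : x ^ h ≤ x + (1 - h) := by
  have := Real.geom_mean_le_arith_mean2_weighted h0 (sub_nonneg.2 h1) hx zero_le_one (by ring)
  rw [Real.one_rpow] at this
  nlinarith

/-- splitting of a scale -/
lemma split_bound (N D x y h : ℝ) (hN : 0 ≤ N) (hD : 0 ≤ D) (hx : 0 ≤ x) (hy : 0 ≤ y)
    (hxy : 0 < x + y) (h0 : 0 ≤ h) (h1 : h ≤ 1) :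
    N * x ^ h + D * y ^ h ≤
      (N * (x / (x+y) + (1-h)) + D * (1 - x/(x+y) + (1-h))) * (x + y) ^ h := by
  have ex : x ^ h = (x/(x+y)) ^ h * (x+y) ^ h := by
    rw [← Real.mul_rpow (by positivity) hxy.le, div_mul_cancel₀ _ hxy.ne']
  have ey : y ^ h = (y/(x+y)) ^ h * (x+y) ^ h := by
    rw [← Real.mul_rpow (by positivity) hxy.le, div_mul_cancel₀ _ hxy.ne']
  have e : 1 - x/(x+y) = y/(x+y) := by field_simp; ring
  have h3 := rpow_le_add (x/(x+y)) h (by positivity) h0 h1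
  have h4 := rpow_le_add (y/(x+y)) h (by positivity) h0 h1
  rw [ex, ey, e]
  have h5 : 0 ≤ (x+y)^h := by positivity
  calc _ = (N * (x/(x+y)) ^ h + D * (y/(x+y)) ^ h) * (x+y)^h := by ring
    _ ≤ _ := by gcongr

lemma tele (b : ℕ → ℝ) (i j : ℕ) (hij : i ≤ j) :
    ∑ k ∈ Finset.Ioc i j, (b (k-1) - b k) = b i - b j := by
  induction j, hij using Nat.le_induction with
  | base => simp
  | succ j hij ih =>
    rw [← Finset.insert_Ioc_right_eq_Ioc_add_one hij, Finset.sum_insert (by simp), ih]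
    simp

lemma find_scale (b : ℕ → ℝ) (P : ℝ → Prop) (n : ℕ) (h0 : ¬ P (b 0)) (hn : P (b n)) :
    ∃ k, 1 ≤ k ∧ k ≤ n ∧ P (b k) ∧ ¬ P (b (k-1)) := by
  classical
  have hex : ∃ k, P (b k) := ⟨n, hn⟩
  refine ⟨Nat.find hex, ?_, Nat.find_min' hex hn, Nat.find_spec hex, ?_⟩
  · by_contra hc
    have : Nat.find hex = 0 := by omega
    exact h0 (this ▸ Nat.find_spec hex)
  · apply Nat.find_min hex
    have : Nat.find hex ≠ 0 := fun h => h0 (h ▸ Nat.find_spec hex)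
    omega

section core
variable (b : ℕ → ℝ) (n : ℕ) (h N : ℝ) (m : Set ℝ → ℝ)

structure Good : Prop where
  hb0 : b 0 = 1
  hb : StrictAnti b
  hbpos : ∀ k, 0 < b k
  hn : 1 ≤ n
  h0 : 0 < h
  h1 : h ≤ 1
  hN : N = (n : ℝ) ^ (1 - h)
  m0 : m ∅ = 0
  mnn : ∀ A, 0 ≤ m A
  m1 : ∀ A, m A ≤ 1
  mmono : ∀ A B, A ∩ Set.Icc 0 1 ⊆ B → m A ≤ m B
  cover : ∀ A, m A ≤ ∑ k ∈ Finset.Icc 1 n, (b (k-1) - b k) ^ h * m (gAff b k ⁻¹' A)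
  moran : ∑ k ∈ Finset.Icc 1 n, (b (k-1) - b k) ^ h = 1

variable {b n h N m}

lemma Good.apos (G : Good b n h N m) {k : ℕ} (hk : 1 ≤ k) : 0 < b (k-1) - b k :=
  sub_pos.2 (G.hb (by omega))

lemma Good.N1 (G : Good b n h N m) : 1 ≤ N := by
  rw [G.hN]
  exact Real.one_le_rpow (by exact_mod_cast G.hn) (by linarith [G.h1])

lemma Good.sumle (G : Good b n h N m) (i j : ℕ) (hij : i ≤ j) (hj : j ≤ n) (T : ℝ)
    (hT : b i - b j ≤ T) :
    ∑ k ∈ Finset.Ioc i j, (b (k-1) - b k) ^ h ≤ N * T ^ h := by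
  rw [G.hN]
  apply sum_rpow_le _ _ _ _ _ _ _ G.h0 G.h1
  · rw [tele b i j hij]; exact hT
  · intro k hk
    rw [Finset.mem_Ioc] at hk
    exact (G.apos (by omega)).le
  · simp; omega

/-- one-step cover with `s` full pieces and one partial piece -/
lemma Good.piece (G : Good b n h N m) (A B : Set ℝ) (s : Finset ℕ) (k : ℕ)
    (hk : k ∈ Finset.Icc 1 n) (hs : s ⊆ Finset.Icc 1 n) (hks : k ∉ s)
    (hB : gAff b k ⁻¹' A ∩ Set.Icc 0 1 ⊆ B)
    (he : ∀ j ∈ Finset.Icc 1 n, j ∉ s → j ≠ k → gAff b j ⁻¹' A ∩ Set.Icc 0 1 ⊆ ∅) :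
    m A ≤ ∑ j ∈ s, (b (j-1) - b j) ^ h + (b (k-1) - b k) ^ h * m B := by
  classical
  have hnn : ∀ j ∈ Finset.Icc 1 n, 0 ≤ (b (j-1) - b j) ^ h := fun j hj =>
    Real.rpow_nonneg (G.apos (Finset.mem_Icc.1 hj).1).le _
  refine (G.cover A).trans ?_
  rw [← Finset.sum_subset (s₁ := insert k s) (Finset.insert_subset hk hs), Finset.sum_insert hks,
    add_comm]
  · apply add_le_add
    · apply Finset.sum_le_sum
      intro j hj
      exact mul_le_of_le_one_right (hnn j (hs hj)) (G.m1 _)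
    · exact mul_le_mul_of_nonneg_left (G.mmono _ _ hB) (hnn k hk)
  · intro j hj hjs
    rw [Finset.mem_insert, not_or] at hjs
    have := G.mmono _ _ (he j hj hjs.2 hjs.1)
    rw [G.m0] at this
    rw [le_antisymm this (G.mnn _), mul_zero]

lemma Good.right (G : Good b n h N m) (C : ℝ) (hC : N ≤ C)
    (hP : ∀ r ∈ Set.Icc (0:ℝ) 1, m (Set.Icc 0 r) ≤ C * r ^ h) (t : ℝ) (ht : t ∈ Set.Icc (0:ℝ) 1) :
    m (Set.Icc (1 - t) 1) ≤ (1 + 2 * (1 - h)) * C * t ^ h := by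
  have hN1 := G.N1
  have h0 := G.h0
  have h1 := G.h1
  have hC0 : 0 ≤ C := by linarith
  have htn : 0 ≤ t ^ h := Real.rpow_nonneg ht.1 _
  have hCC : C * t ^ h ≤ (1 + 2 * (1 - h)) * C * t ^ h := by
    rw [mul_assoc]
    exact le_mul_of_one_le_left (by positivity) (by linarith)
  by_cases hbn : 1 - t ≤ b n
  · refine le_trans ?_ hCC
    refine (G.m1 _).trans ?_
    rw [← G.moran]
    have := G.sumle 0 n (by omega) le_rfl t (by rw [G.hb0]; linarith)
    have e : Finset.Ioc 0 n = Finset.Icc 1 n := by ext; simp; omega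
    rw [e] at this
    exact this.trans (by gcongr)
  · push Not at hbn
    obtain ⟨k, hk1, hkn, hk, hk'⟩ := find_scale b (fun x => x < 1 - t) n
      (by rw [G.hb0]; simp; linarith [ht.1]) hbn
    push Not at hk'
    have ha := G.apos hk1
    set a := b (k-1) - b k with hadef
    have hy : 0 ≤ b (k-1) - (1 - t) := by linarith
    have p := G.piece (Set.Icc (1-t) 1) (Set.Icc 0 ((b (k-1) - (1-t)) / a)) (Finset.Ioc 0 (k-1)) k
      (Finset.mem_Icc.2 ⟨hk1, hkn⟩) (by intro j; simp; omega) (by rw [Finset.mem_Ioc]; omega) ?_ ?_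
    · have q := hP ((b (k-1) - (1-t)) / a) ⟨by positivity, by rw [div_le_one ha]; linarith⟩
      have s := G.sumle 0 (k-1) (by omega) (by omega) (1 - b (k-1)) (by rw [G.hb0])
      have hx : 0 ≤ 1 - b (k-1) := by
        rw [← G.hb0]; exact sub_nonneg.2 (G.hb.antitone (by omega))
      have e : a ^ h * (C * ((b (k-1) - (1-t)) / a) ^ h) = C * (b (k-1) - (1-t)) ^ h := by
        rw [mul_left_comm, ← Real.mul_rpow ha.le (by positivity), mul_div_cancel₀ _ ha.ne']
      have q2 : a ^ h * m (Set.Icc 0 ((b (k-1) - (1-t)) / a)) ≤ C * (b (k-1) - (1-t)) ^ h := by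
        rw [← e]; gcongr
      have s2 : N * (1 - b (k-1)) ^ h ≤ C * (1 - b (k-1)) ^ h := by gcongr
      rcases ht.1.eq_or_lt with h00 | htpos
      · have z1 : 1 - b (k-1) = 0 := by linarith
        have z2 : b (k-1) - (1-t) = 0 := by linarith
        rw [z1, Real.zero_rpow h0.ne'] at s
        rw [z2, Real.zero_rpow h0.ne'] at q2
        have tz : t ^ h = 0 := by rw [← h00, Real.zero_rpow h0.ne']
        rw [z2, ← hadef] at p
        rw [tz]
        linarith
      · have sb := split_bound C C (1 - b (k-1)) (b (k-1) - (1-t)) h hC0 hC0 hx hy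
          (by linarith) h0.le h1
        have e2 : 1 - b (k-1) + (b (k-1) - (1-t)) = t := by ring
        rw [e2] at sb
        refine p.trans (le_trans (by linarith) (sb.trans (le_of_eq ?_)))
        ring
    · rintro x ⟨⟨hx1, hx2⟩, hx3⟩
      refine ⟨hx3.1, ?_⟩
      rw [le_div_iff₀ ha]
      unfold gAff at hx1
      rw [← hadef] at hx1
      linarith
    · rintro j hj hjs hjk x ⟨⟨hx1, hx2⟩, hx3⟩
      simp only [Finset.mem_Icc, Finset.mem_Ioc] at hj hjs
      have hjb : b (j-1) ≤ b k := G.hb.antitone (by omega)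
      have haj := G.apos hj.1
      unfold gAff at hx1
      have := mul_nonneg haj.le hx3.1
      exact absurd hx1 (by linarith)

lemma Good.left (G : Good b n h N m) (C c : ℝ) (hC : N ≤ C) (hc0 : 0 < c) 
    (hc : ∀ k, c * b k ≤ b (k+1))
    (hP : ∀ r ∈ Set.Icc (0:ℝ) 1, m (Set.Icc 0 r) ≤ C * r ^ h) (r : ℝ) (hr0 : 0 ≤ r) (hr1 : r < 1) :
    m (Set.Icc 0 r) ≤
      (N * (c + (1-h)) + (1 + 2 * (1 - h)) * C * (1 - c + (1-h))) * r ^ h := by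
  have hN1 := G.N1
  have h0 := G.h0
  have h1 := G.h1
  have hC0 : 0 ≤ C := by linarith
  have hc1 : c ≤ 1 := by
    have h2 := hc 0
    have h3 : b 1 < b 0 := G.hb (by omega)
    rw [zero_add, G.hb0] at *
    linarith
  have hd : 0 ≤ 1 - h := by linarith
  have hrn : 0 ≤ r ^ h := Real.rpow_nonneg hr0 _
  by_cases hbn : r < b n
  · have : m (Set.Icc 0 r) ≤ 0 := by
      refine (G.cover _).trans (Finset.sum_nonpos ?_)
      intro j hj
      rw [Finset.mem_Icc] at hj
      have haj := G.apos hj.1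
      have := G.mmono (gAff b j ⁻¹' Set.Icc 0 r) ∅ ?_
      · rw [G.m0] at this
        rw [le_antisymm this (G.mnn _), mul_zero]
      · rintro x ⟨⟨hx1, hx2⟩, hx3⟩
        have hjb : b n ≤ b j := G.hb.antitone hj.2
        unfold gAff at hx2
        have := mul_le_of_le_one_right haj.le hx3.2
        exact absurd hx2 (by linarith)
    refine this.trans (mul_nonneg ?_ hrn)
    have : 0 ≤ 1 - c := by linarith
    positivity
  · push Not at hbn
    obtain ⟨k, hk1, hkn, hk, hk'⟩ := find_scale b (fun x => x ≤ r) n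
      (by rw [G.hb0]; simpa using hr1) hbn
    push Not at hk'
    have ha := G.apos hk1
    set a := b (k-1) - b k with hadef
    have hy : 0 ≤ r - b k := by linarith
    have hbk := G.hbpos k
    have p := G.piece (Set.Icc 0 r) (Set.Icc (1 - (r - b k)/a) 1) (Finset.Ioc k n) k
      (Finset.mem_Icc.2 ⟨hk1, hkn⟩) (by intro j; simp; omega) (by simp) ?_ ?_
    · have q := G.right C hC hP ((r - b k) / a) ⟨by positivity, by rw [div_le_one ha]; linarith⟩
      have s := G.sumle k n hkn le_rfl (b k) (by linarith [G.hbpos n])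
      set D := (1 + 2 * (1-h)) * C with hD
      have hND : N ≤ D := by rw [hD]; nlinarith
      have e : a ^ h * (D * ((r - b k) / a) ^ h) = D * (r - b k) ^ h := by
        rw [mul_left_comm, ← Real.mul_rpow ha.le (by positivity), mul_div_cancel₀ _ ha.ne']
      have q2 : a ^ h * m (Set.Icc (1 - (r - b k)/a) 1) ≤ D * (r - b k) ^ h := by
        rw [← e]; gcongr
      have sb := split_bound N D (b k) (r - b k) h (by linarith) (by linarith) hbk.le hy
          (by linarith) h0.le h1
      have e2 : b k + (r - b k) = r := by ring
      rw [e2] at sb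
      refine p.trans (le_trans (by linarith) (sb.trans ?_))
      apply mul_le_mul_of_nonneg_right _ hrn
      have hcp : c ≤ b k / r := by
        rw [le_div_iff₀ (by linarith)]
        have := hc (k-1)
        rw [Nat.sub_add_cancel hk1] at this
        nlinarith
      nlinarith
    · rintro x ⟨⟨hx1, hx2⟩, hx3⟩
      refine ⟨?_, hx3.2⟩
      unfold gAff at hx2
      rw [← hadef] at hx2
      rw [sub_le_comm, le_div_iff₀ ha]
      linarith
    · rintro j hj hjs hjk x ⟨⟨hx1, hx2⟩, hx3⟩
      simp only [Finset.mem_Icc, Finset.mem_Ioc] at hj hjs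
      have hjb : b (k-1) ≤ b j := G.hb.antitone (by omega)
      have haj := G.apos hj.1
      unfold gAff at hx2
      have := mul_le_of_le_one_right haj.le hx3.2
      exact absurd hx2 (by linarith)

lemma Good.final (G : Good b n h N m) (K c : ℝ) (hK : N ≤ K) (hc0 : 0 < c)
    (hc : ∀ k, c * b k ≤ b (k+1))
    (hq : N / K * (c + (1-h)) + (1 + 2 * (1 - h)) * (1 - c + (1-h)) < 1)
    (r : ℝ) (hr : r ∈ Set.Icc (0:ℝ) 1) : m (Set.Icc 0 r) ≤ K * r ^ h := by
  have hN1 := G.N1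
  have h0 := G.h0
  have h1 := G.h1
  set q := N / K * (c + (1-h)) + (1 + 2 * (1 - h)) * (1 - c + (1-h)) with hqdef
  let S : Set ℝ := {C | K ≤ C ∧ ∀ r ∈ Set.Icc (0:ℝ) 1, m (Set.Icc 0 r) ≤ C * r ^ h}
  have step : ∀ C ∈ S, max K (q * C) ∈ S := by
    rintro C ⟨hCK, hP⟩
    refine ⟨le_max_left _ _, fun r hr => ?_⟩
    rcases hr.2.eq_or_lt with rfl | hr1
    · rw [Real.one_rpow, mul_one]
      exact (G.m1 _).trans ((hN1.trans hK).trans (le_max_left _ _))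
    · refine (G.left C c (hK.trans hCK) hc0 hc hP r hr.1 hr1).trans ?_
      apply mul_le_mul_of_nonneg_right _ (Real.rpow_nonneg hr.1 _)
      refine le_trans ?_ (le_max_right _ _)
      have : N ≤ N / K * C := by
        rw [div_mul_eq_mul_div, le_div_iff₀ (by linarith)]
        gcongr
      have h3 : N * (c + (1-h)) ≤ N / K * C * (c + (1-h)) := by
        apply mul_le_mul_of_nonneg_right this; linarith
      rw [hqdef]
      nlinarith
  have hbdd : BddBelow S := ⟨K, fun C hC => hC.1⟩
  have hne : S.Nonempty := by
    have hbn := G.hbpos n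
    have hbn1 : b n ≤ 1 := by rw [← G.hb0]; exact G.hb.antitone (by omega)
    refine ⟨max K (1 / (b n) ^ h), le_max_left _ _, fun r hr => ?_⟩
    by_cases hrb : r < b n
    · have : m (Set.Icc 0 r) ≤ 0 := by
        refine (G.cover _).trans (Finset.sum_nonpos ?_)
        intro j hj
        rw [Finset.mem_Icc] at hj
        have haj := G.apos hj.1
        have := G.mmono (gAff b j ⁻¹' Set.Icc 0 r) ∅ ?_
        · rw [G.m0] at this
          rw [le_antisymm this (G.mnn _), mul_zero]
        · rintro x ⟨⟨hx1, hx2⟩, hx3⟩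
          have hjb : b n ≤ b j := G.hb.antitone hj.2
          unfold gAff at hx2
          have := mul_le_of_le_one_right haj.le hx3.2
          exact absurd hx2 (by linarith)
      exact this.trans (mul_nonneg (le_max_of_le_left (by linarith)) (Real.rpow_nonneg hr.1 _))
    · push Not at hrb
      refine (G.m1 _).trans ?_
      have h2 : (b n) ^ h ≤ r ^ h := Real.rpow_le_rpow hbn.le hrb h0.le
      have h3 : 0 < (b n) ^ h := by positivity
      calc (1:ℝ) = 1 / (b n) ^ h * (b n) ^ h := by field_simp
        _ ≤ _ := by
          apply mul_le_mul (le_max_right _ _) h2 h3.le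
          exact le_max_of_le_left (by linarith)
  set I := sInf S with hI
  have hKI : K ≤ I := le_csInf hne fun C hC => hC.1
  have hmem : I ∈ S := by
    refine ⟨hKI, fun r hr => ?_⟩
    rcases hr.1.eq_or_lt with rfl | hr0
    · obtain ⟨C, hC⟩ := hne
      have := hC.2 0 hr
      rw [Real.zero_rpow h0.ne', mul_zero] at *
      exact this
    · have hrp : 0 < r ^ h := Real.rpow_pos_of_pos hr0 _
      rw [← div_le_iff₀ hrp]
      apply le_csInf hne
      intro C hC
      rw [div_le_iff₀ hrp]
      exact hC.2 r hr
  have h5 : I ≤ max K (q * I) := csInf_le hbdd (step I hmem)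
  have h6 : I ≤ K := by
    rcases le_max_iff.1 h5 with h | h
    · exact h
    · nlinarith
  have := hmem.2 r hr
  rwa [le_antisymm h6 hKI] at this

end core

theorem linear_density_near_zero
    (b : ℕ → ℝ) (h : ℕ → ℝ)
    (hb0 : b 0 = 1) (hbanti : StrictAnti b)
    (hblim : Filter.Tendsto b Filter.atTop (nhds 0))
    (hmoran : ∀ n, 1 ≤ n → ∑ k ∈ Finset.Icc 1 n, (b (k - 1) - b k) ^ h n = 1)
    (hdimH : ∀ n, 1 ≤ n → dimH (limitSet (gAff b) n) = ENNReal.ofReal (h n))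
    (hC1 : Filter.Tendsto (fun n : ℕ => (1 - h n) * Real.log n) Filter.atTop (nhds 0))
    (hC2 : ∃ M : ℝ, ∀ k : ℕ, (b k - b (k + 1)) / b (k + 1) ≤ M) :
    Filter.limsup
      (fun n : ℕ => ⨆ r ∈ Set.Ioo (0 : ℝ) 1,
        normMeas (gAff b) h n (Set.Icc 0 r) / ENNReal.ofReal (r ^ h n))
      Filter.atTop ≤ 1 := by
  have hbpos : ∀ k, 0 < b k := fun k =>
    lt_of_le_of_lt (hbanti.antitone.le_of_tendsto hblim (k+1)) (hbanti (Nat.lt_succ_self k))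
  have hble : ∀ k, b k ≤ 1 := fun k => hb0 ▸ hbanti.antitone (Nat.zero_le k)
  obtain ⟨M, hM⟩ := hC2
  have hMpos : 0 < M := lt_of_lt_of_le
    (div_pos (sub_pos.2 (hbanti (Nat.lt_succ_self 0))) (hbpos _)) (hM 0)
  obtain ⟨c, hcdef⟩ : ∃ c, c = 1 / (M + 1) := ⟨_, rfl⟩
  have hc0 : 0 < c := by rw [hcdef]; positivity
  have hc : ∀ k, c * b k ≤ b (k+1) := by
    intro k
    have := hM k
    rw [div_le_iff₀ (hbpos _)] at this
    rw [hcdef, div_mul_eq_mul_div, div_le_iff₀ (by linarith)]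
    linarith
  -- asymptotics
  have hN : Tendsto (fun n : ℕ => (n:ℝ) ^ (1 - h n)) atTop (𝓝 1) := by
    have := (Real.continuous_exp.tendsto 0).comp hC1
    rw [Real.exp_zero] at this
    refine this.congr' ?_
    filter_upwards [eventually_ge_atTop 1] with n hn
    rw [Real.rpow_def_of_pos (by exact_mod_cast hn), mul_comm]
    rfl
  have hd : Tendsto (fun n : ℕ => 1 - h n) atTop (𝓝 0) := by
    have hl : Tendsto (fun n : ℕ => Real.log n) atTop atTop :=
      Real.tendsto_log_atTop.comp tendsto_natCast_atTop_atTop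
    have := hC1.mul (hl.inv_tendsto_atTop)
    rw [mul_zero] at this
    refine this.congr' ?_
    filter_upwards [hl.eventually_gt_atTop 0] with n hn
    simp only [Pi.inv_apply]
    field_simp
  apply ENNReal.le_of_forall_pos_le_add
  intro ε hε _
  apply Filter.limsup_le_of_le
  · isBoundedDefault
  obtain ⟨K, hK⟩ : ∃ K : ℝ, K = 1 + ε := ⟨_, rfl⟩
  have hK1 : 1 < K := by rw [hK]; have : (0:ℝ) < ε := hε
                         linarith
  have hq : Tendsto (fun n : ℕ => (n:ℝ) ^ (1 - h n) / K * (c + (1-h n)) +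
      (1 + 2 * (1 - h n)) * (1 - c + (1-h n))) atTop
      (𝓝 (1 / K * (c + 0) + (1 + 2 * 0) * (1 - c + 0))) :=
    ((hN.div_const K).mul (hd.const_add c)).add
      (((hd.const_mul 2).const_add 1).mul (hd.const_add (1 - c)))
  have hq1 : 1 / K * (c + 0) + (1 + 2 * 0) * (1 - c + 0) < 1 := by
    have : 1 / K < 1 := by rw [div_lt_one (by linarith)]; exact hK1
    nlinarith
  filter_upwards [eventually_ge_atTop 1, hN.eventually_lt_const hK1, hq.eventually_lt_const hq1,
    hd.eventually_lt_const one_pos] with n hn hnK hnq hnd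
  have hh0 : 0 < h n := by linarith
  have ha : ∀ k ∈ Finset.Icc 1 n, 0 < b (k-1) - b k := fun k hk =>
    sub_pos.2 (hbanti (by have := (Finset.mem_Icc.1 hk).1; omega))
  have hh1 : h n ≤ 1 := by
    by_contra hcon
    push Not at hcon
    have h1 := hmoran n hn
    have h2 : ∑ k ∈ Finset.Icc 1 n, (b (k - 1) - b k) ^ h n
        ≤ ∑ k ∈ Finset.Icc 1 n, (b (k - 1) - b k) := by
      apply Finset.sum_le_sum
      intro k hk
      have := Real.rpow_le_rpow_of_exponent_ge (ha k hk)
        (by linarith [hble (k-1), hbpos k]) hcon.le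
      rwa [Real.rpow_one] at this
    have e : Finset.Icc 1 n = Finset.Ioc 0 n := by ext; simp; omega
    have h3 := tele b 0 n (by omega)
    rw [← e, hb0] at h3
    linarith [hbpos n]
  have hg : ∀ k ∈ Finset.Icc 1 n, gAff b k '' Set.Icc 0 1 ⊆ Set.Icc 0 1 := by
    rintro k hk _ ⟨x, hx, rfl⟩
    have h1 := ha k hk
    have h2 := mul_le_of_le_one_right h1.le hx.2
    have h3 := mul_nonneg h1.le hx.1
    unfold gAff
    exact ⟨by linarith [hbpos k], by linarith [hble (k-1)]⟩
  have hinj : ∀ k ∈ Finset.Icc 1 n, Function.Injective (gAff b k) := by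
    intro k hk x y hxy
    unfold gAff at hxy
    exact mul_left_cancel₀ (ha k hk).ne' (by linarith)
  have hle1 : ∀ A, normMeas (gAff b) h n A ≤ 1 := fun A =>
    (ENNReal.div_le_div_right (measure_mono inter_subset_right) _).trans ENNReal.div_self_le_one
  have hfin : ∀ A, normMeas (gAff b) h n A ≠ ⊤ := fun A =>
    ((hle1 A).trans_lt ENNReal.one_lt_top).ne
  have G : Good b n (h n) ((n:ℝ) ^ (1 - h n)) (fun A => (normMeas (gAff b) h n A).toReal) := by
    refine ⟨hb0, hbanti, hbpos, hn, hh0, hh1, rfl, ?_, fun A => ENNReal.toReal_nonneg, ?_, ?_, ?_,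
      hmoran n hn⟩
    · simp [normMeas]
    · intro A
      simpa using ENNReal.toReal_mono ENNReal.one_ne_top (hle1 A)
    · intro A B hAB
      apply ENNReal.toReal_mono (hfin _)
      apply ENNReal.div_le_div_right
      apply measure_mono
      rintro x ⟨hx1, hx2⟩
      exact ⟨hAB ⟨hx1, limitSet_Icc _ n hg hx2⟩, hx2⟩
    · intro A
      have h1 := normMeas_cover b h n hh0.le hbanti hg hinj A
      have hf : ∀ k ∈ Finset.Icc 1 n, ENNReal.ofReal ((b (k-1) - b k) ^ h n) *
          normMeas (gAff b) h n (gAff b k ⁻¹' A) ≠ ⊤ := fun k _ =>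
        ENNReal.mul_ne_top ENNReal.ofReal_ne_top (hfin _)
      have h2 := ENNReal.toReal_mono (ENNReal.sum_ne_top.2 hf) h1
      rw [ENNReal.toReal_sum hf] at h2
      refine h2.trans (le_of_eq (Finset.sum_congr rfl fun k hk => ?_))
      rw [ENNReal.toReal_mul, ENNReal.toReal_ofReal (Real.rpow_nonneg (ha k hk).le _)]
  apply iSup₂_le
  intro r hr
  have := G.final K c hnK.le hc0 hc hnq r ⟨hr.1.le, hr.2.le⟩
  apply ENNReal.div_le_of_le_mul
  rw [← ENNReal.ofReal_toReal (hfin (Set.Icc 0 r))]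
  refine (ENNReal.ofReal_le_ofReal this).trans (le_of_eq ?_)
  rw [ENNReal.ofReal_mul (by linarith), hK, ENNReal.ofReal_add zero_le_one ε.coe_nonneg]
  simp
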